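/- Let A = U(g ⊗ ℂ[t]/t^{M}) be the universal enveloping algebra of the truncated current Lie algebra g ⊗ ℂ[t]/t^M, where M = (c+1)N for positive integers c, N. Define the decreasing filtration T_0 ⊇ T_1 ⊇ … by T_0 = A and T_j = (g ⊗ t^N ℂ[t]/t^M)·T_{j−1}. Then the associated graded algebra gr A = ⊕_j T_j/T_{j+1} is isomorphic, as an associative algebra, to U(g ⊗ ℂ[t,u]/⟨t^N, u^{c+1}⟩), via the map sending the class of x ⊗ t^{jN+s} (for 0 ≤ s < N) to x ⊗ u^j t^s. -/

import Mathlib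

open scoped TensorProduct DirectSum

/-- A current algebra `A ⊗[ℂ] g` (base change of a complex Lie algebra `g`) is in
particular a Lie algebra over `ℂ`. -/
noncomputable instance lieAlgebraOfBaseChange (A : Type*) [CommRing A] [Algebra ℂ A]
    (g : Type*) [LieRing g] [LieAlgebra ℂ g] : LieAlgebra ℂ (A ⊗[ℂ] g) where
  lie_smul c x y := by
    rw [← algebraMap_smul A c y, LieAlgebra.lie_smul ((algebraMap ℂ A) c) x y,
      algebraMap_smul]

/-- The truncated polynomial ring `ℂ[t]/t^M`. -/
noncomputable abbrev TruncT (M : ℕ) :=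
  Polynomial ℂ ⧸ Ideal.span {(Polynomial.X : Polynomial ℂ) ^ M}

/-- The truncated polynomial ring `ℂ[t,u]/⟨t^N, u^{c+1}⟩` (with `t = X 0`, `u = X 1`). -/
noncomputable abbrev TruncTU (N c : ℕ) :=
  MvPolynomial (Fin 2) ℂ ⧸
    Ideal.span {(MvPolynomial.X 0 : MvPolynomial (Fin 2) ℂ) ^ N,
      (MvPolynomial.X 1 : MvPolynomial (Fin 2) ℂ) ^ (c + 1)}

/-- `A = U(g ⊗ ℂ[t]/t^M)`. -/
noncomputable abbrev UTrunc (M : ℕ) (g : Type*) [LieRing g] [LieAlgebra ℂ g] :=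
  UniversalEnvelopingAlgebra ℂ (TruncT M ⊗[ℂ] g)

/-- `U(g ⊗ ℂ[t,u]/⟨t^N,u^{c+1}⟩)`, the enveloping algebra of the truncated toroidal
current algebra. -/
noncomputable abbrev UToroidal (N c : ℕ) (g : Type*) [LieRing g] [LieAlgebra ℂ g] :=
  UniversalEnvelopingAlgebra ℂ (TruncTU N c ⊗[ℂ] g)

/-- The subspace of `U(g ⊗ ℂ[t]/t^M)` spanned by the image of `g ⊗ t^N ℂ[t]`. -/
noncomputable def Wsub (M N : ℕ) (g : Type*) [LieRing g] [LieAlgebra ℂ g] :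
    Submodule ℂ (UTrunc M g) :=
  Submodule.span ℂ
    {z | ∃ (p : Polynomial ℂ) (x : g),
      z = UniversalEnvelopingAlgebra.ι ℂ
        ((Ideal.Quotient.mk _ (Polynomial.X ^ N * p) : TruncT M) ⊗ₜ[ℂ] x)}

/-- The decreasing filtration `T_0 ⊇ T_1 ⊇ ⋯` of `A = U(g ⊗ ℂ[t]/t^M)`:
`T_0 = A` and `T_j = (g ⊗ t^N ℂ[t])·T_{j−1}`. -/
noncomputable def Tfil (M N : ℕ) (g : Type*) [LieRing g] [LieAlgebra ℂ g] :
    ℕ → Submodule ℂ (UTrunc M g)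
  | 0 => ⊤
  | j + 1 => Wsub M N g * Tfil M N g j

/-- The associated graded vector space `gr A = ⊕_j T_j/T_{j+1}`. -/
noncomputable abbrev grT (M N : ℕ) (g : Type*) [LieRing g] [LieAlgebra ℂ g] :=
  ⨁ j : ℕ, (Tfil M N g j ⧸ (Tfil M N g (j + 1)).comap (Tfil M N g j).subtype)

/-!
Deform the regular representation of `ℂ[t]/t^M` by a formal variable `ħ` that counts how often a
multiplication carries the exponent of `t` over a multiple of `N`: then `t ^ m` is represented by
a series of order at least `m / N`, and since leading coefficients multiply, the coefficients of
`ħ ^ j` in the images of `t ^ (j * N + s)` satisfy the relations of `t ^ s * u ^ j` in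
`ℂ[t,u]/⟨t^N, u^(c+1)⟩`. Tensoring with a faithful representation of `g` and passing to enveloping
algebras gives `Φ : U(g ⊗ ℂ[t]/t^M) → E⟦ħ⟧` and `Θ : U(g ⊗ ℂ[t,u]/⟨t^N, u^(c+1)⟩) → E`. As `Φ`
carries `T_j` into the series of order at least `j`, taking coefficients of `ħ ^ j` is a
multiplicative map `gr A → E`, and it agrees with `Θ` on generators.

Since `g` is perfect, `x ⊗ t ^ m` lies in `T_{m / N}`, so straightening shows that the classes of
ordered words in the generators span `gr A`; the corresponding words span the toroidal enveloping
algebra. Their common images in `E` are linearly independent, by the independence half of the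
Poincaré–Birkhoff–Witt theorem for associative algebras, which holds because words in linear vector
fields have independent leading symbols. Hence both maps into `E` are injective with the same image.
-/

section Words

variable {I U : Type*}

/-- The noncommutative monomial `y i₁ * ⋯ * y iₙ` indexed by the list `[i₁, …, iₙ]`. -/
def word [Monoid U] (y : I → U) (l : List I) : U :=
  (l.map y).prod

@[simp]
theorem word_nil [Monoid U] (y : I → U) : word y [] = 1 := rfl

@[simp]
theorem word_cons [Monoid U] (y : I → U) (i : I) (l : List I) :
    word y (i :: l) = y i * word y l := by
  simp [word]

theorem map_word {V F : Type*} [Monoid U] [Monoid V] [FunLike F U V] [MonoidHomClass F U V]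
    (f : F) (y : I → U) (l : List I) : f (word y l) = word (f ∘ y) l := by
  simp [word, map_list_prod]

section Straightening

open Submodule

variable {K : Type*} [CommRing K] [Ring U] [Algebra K U] {y : I → U} {wt : I → ℕ}

variable (K y wt) in
/-- The span of the words in `y` of length less than `n` and weight at least `j`: the error terms
that arise when a word of length `n` and weight `j` is rearranged. -/
def shorterWords (n j : ℕ) : Submodule K U :=
  span K (word y '' {l | l.length < n ∧ j ≤ (l.map wt).sum})

theorem mul_mem_shorterWords (i : I) {n j : ℕ} {u : U} (hu : u ∈ shorterWords K y wt n j) :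
    y i * u ∈ shorterWords K y wt (n + 1) (wt i + j) := by
  suffices shorterWords K y wt n j ≤ (shorterWords K y wt (n + 1) (wt i + j)).comap
    (LinearMap.mulLeft K (y i)) from this hu
  refine span_le.2 ?_
  rintro _ ⟨l, ⟨hlen, hwt⟩, rfl⟩
  exact subset_span ⟨i :: l, by simpa using ⟨hlen, hwt⟩, word_cons ..⟩

theorem mul_word_mem_shorterWords (l : List I) {n j : ℕ} {u : U}
    (hu : u ∈ shorterWords K y wt n j) :
    u * word y l ∈ shorterWords K y wt (n + l.length) (j + (l.map wt).sum) := by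
  suffices shorterWords K y wt n j ≤ (shorterWords K y wt (n + l.length)
    (j + (l.map wt).sum)).comap (LinearMap.mulRight K (word y l)) from this hu
  refine span_le.2 ?_
  rintro _ ⟨l', ⟨hlen, hwt⟩, rfl⟩
  exact subset_span ⟨l' ++ l, by simpa using ⟨hlen, hwt⟩, by simp [word]⟩

theorem word_sub_word_mem_shorterWords
    (hcomm : ∀ i k, y i * y k - y k * y i ∈ span K (y '' {l | wt i + wt k ≤ wt l}))
    {l l' : List I} (h : l.Perm l') :
    word y l - word y l' ∈ shorterWords K y wt l.length (l.map wt).sum := by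
  induction h with
  | nil => simp
  | cons i _ ih =>
    simpa [← mul_sub, add_comm] using mul_mem_shorterWords i ih
  | swap i k l =>
    have hmem : y k * y i - y i * y k ∈ shorterWords K y wt 2 (wt k + wt i) := by
      refine span_mono ?_ (hcomm k i)
      rintro _ ⟨m, hm, rfl⟩
      exact ⟨[m], by simpa using hm, by simp⟩
    simpa [sub_mul, mul_assoc, add_comm, add_left_comm, add_assoc]
      using mul_word_mem_shorterWords l hmem
  | trans h₁ _ ih₁ ih₂ =>
    rw [← h₁.length_eq, ← (h₁.map wt).sum_eq] at ih₂
    simpa using add_mem ih₁ ih₂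

/-- The straightening half of the Poincaré–Birkhoff–Witt theorem, for weighted generators. A
multiset stands for the word on its arbitrarily chosen ordering. -/
theorem word_mem_span_word_toList
    (hcomm : ∀ i k, y i * y k - y k * y i ∈ span K (y '' {l | wt i + wt k ≤ wt l}))
    (l : List I) {j : ℕ} (hj : j ≤ (l.map wt).sum) :
    word y l ∈ span K ((fun α : Multiset I => word y α.toList) '' {α | j ≤ (α.map wt).sum}) := by
  induction hn : l.length using Nat.strong_induction_on generalizing l j with
  | _ n ih =>
    have hperm : l.Perm (l : Multiset I).toList := by
      rw [← Multiset.coe_eq_coe, Multiset.coe_toList]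
    have herr := word_sub_word_mem_shorterWords hcomm hperm
    have hshorter : shorterWords K y wt l.length (l.map wt).sum ≤
        span K ((fun α : Multiset I => word y α.toList) '' {α | j ≤ (α.map wt).sum}) := by
      refine span_le.2 ?_
      rintro _ ⟨l', ⟨hlen, hwt⟩, rfl⟩
      exact ih _ (hn ▸ hlen) l' (hj.trans hwt) rfl
    rw [← sub_add_cancel (word y l) (word y (l : Multiset I).toList)]
    exact add_mem (hshorter herr) (subset_span ⟨l, by simpa using hj, rfl⟩)

end Straightening

section EnvelopingAlgebra

open UniversalEnvelopingAlgebra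

attribute [local instance 100] LieRing.ofAssociativeRing

variable {K L : Type*} [CommRing K] [LieRing L] [LieAlgebra K L]

theorem adjoin_range_ι_eq_top :
    Algebra.adjoin K (Set.range (ι K : L → UniversalEnvelopingAlgebra K L)) = ⊤ := by
  have hrange : Set.range (ι K : L → UniversalEnvelopingAlgebra K L) =
      mkAlgHom K L '' Set.range (TensorAlgebra.ι K) := by
    rw [← Set.range_comp]
    exact congrArg Set.range (funext fun x => (ι_apply K x))
  have hsurj : Function.Surjective (mkAlgHom K L) := RingCon.mkₐ_surjective _
  rwa [hrange, ← AlgHom.map_adjoin, TensorAlgebra.adjoin_range_ι, Algebra.map_top,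
    AlgHom.range_eq_top]

theorem span_word_ι_eq_top {y : I → L} (hy : Submodule.span K (Set.range y) = ⊤) :
    Submodule.span K (Set.range (word (ι K ∘ y))) = ⊤ := by
  have hι : (Submodule.span K (Set.range (ι K ∘ y)) : Set (UniversalEnvelopingAlgebra K L)) =
      Set.range (ι K) := by
    rw [Set.range_comp, ← LieHom.coe_toLinearMap, ← Submodule.map_span, hy,
      Submodule.map_top, LinearMap.coe_range]
  have hclosure : Set.range (word (ι K ∘ y)) = Submonoid.closure (Set.range (ι K ∘ y)) := by
    rw [← FreeMonoid.mrange_lift, MonoidHom.coe_mrange,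
      ← (FreeMonoid.toList (α := I)).surjective.range_comp]
    exact congrArg Set.range (funext fun l => (FreeMonoid.lift_apply _ l).symm)
  rw [hclosure, ← Algebra.adjoin_eq_span, ← Algebra.adjoin_span, hι, adjoin_range_ι_eq_top,
    Algebra.top_toSubmodule]

theorem ι_mul_sub_mul_ι (x y : L) :
    (ι K x * ι K y - ι K y * ι K x : UniversalEnvelopingAlgebra K L) = ι K ⁅x, y⁆ :=
  ((ι K).map_lie x y).symm

theorem ι_mem_span_image {y : I → L} {s : Set I} {z : L} (hz : z ∈ Submodule.span K (y '' s)) :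
    ι K z ∈ Submodule.span K ((ι K ∘ y : I → UniversalEnvelopingAlgebra K L) '' s) := by
  rw [Set.image_comp, ← LieHom.coe_toLinearMap, ← Submodule.map_span]
  exact Submodule.mem_map_of_mem hz

theorem span_word_ι_toList_eq_top {y : I → L} (hy : Submodule.span K (Set.range y) = ⊤) :
    Submodule.span K (Set.range fun α : Multiset I =>
      word (ι K ∘ y : I → UniversalEnvelopingAlgebra K L) α.toList) = ⊤ := by
  have hcomm (i k : I) : (ι K ∘ y) i * (ι K ∘ y) k - (ι K ∘ y) k * (ι K ∘ y) i ∈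
      Submodule.span K ((ι K ∘ y : I → UniversalEnvelopingAlgebra K L) '' {_l | 0 + 0 ≤ 0}) := by
    rw [Function.comp_apply, Function.comp_apply, ι_mul_sub_mul_ι]
    exact ι_mem_span_image (by simp [hy])
  rw [eq_top_iff, ← span_word_ι_eq_top hy, Submodule.span_le]
  rintro _ ⟨l, rfl⟩
  simpa using word_mem_span_word_toList (wt := fun _ => 0) hcomm l (Nat.zero_le _)

end EnvelopingAlgebra

end Words

section Submodules

variable {K A : Type*} [CommRing K] [Ring A] [Algebra K A]

theorem top_mul_le_mul_top_of_commutator_mem {s : Set A} (hs : Algebra.adjoin K s = ⊤)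
    {W : Submodule K A} (hW : ∀ a ∈ s, ∀ w ∈ W, a * w - w * a ∈ W) : ⊤ * W ≤ W * ⊤ := by
  have hstable (a : A) : ∀ u ∈ W * ⊤, a * u ∈ W * ⊤ := by
    induction (hs ▸ Algebra.mem_top : a ∈ Algebra.adjoin K s) using Algebra.adjoin_induction with
    | mem a ha =>
      refine fun u hu => Submodule.mul_induction_on hu (fun w hw v _ => ?_) fun u v hu hv => ?_
      · rw [← mul_assoc, ← sub_add_cancel (a * w) (w * a), add_mul, mul_assoc w]
        exact add_mem (Submodule.mul_mem_mul (hW a ha w hw) trivial)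
          (Submodule.mul_mem_mul hw trivial)
      · rw [mul_add]
        exact add_mem hu hv
    | algebraMap r =>
      intro u hu
      rw [← Algebra.smul_def]
      exact Submodule.smul_mem _ r hu
    | add a a' _ _ ha ha' =>
      intro u hu
      rw [add_mul]
      exact add_mem (ha u hu) (ha' u hu)
    | mul a a' _ _ ha ha' =>
      intro u hu
      rw [mul_assoc]
      exact ha _ (ha' u hu)
  refine Submodule.mul_le.2 fun a _ w hw => hstable a w ?_
  simpa using Submodule.mul_mem_mul hw (Submodule.mem_top (x := (1 : A)))

end Submodules

section TensorProducts

variable {K P Q ι κ : Type*} [CommSemiring K] [AddCommMonoid P] [Module K P] [AddCommMonoid Q]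
  [Module K Q]

theorem tmul_mem_span_image {v : ι → P} {w : κ → Q} {s : Set ι} {p : P} {x : Q}
    (hp : p ∈ Submodule.span K (v '' s)) (hx : x ∈ Submodule.span K (Set.range w)) :
    p ⊗ₜ[K] x ∈ Submodule.span K ((fun i : κ × ι => v i.2 ⊗ₜ[K] w i.1) '' {i | i.2 ∈ s}) := by
  have h := Submodule.apply_mem_map₂ (TensorProduct.mk K P Q) hp hx
  rw [Submodule.map₂_span_span] at h
  refine Submodule.span_mono ?_ h
  rintro _ ⟨_, ⟨i, hi, rfl⟩, _, ⟨k, rfl⟩, rfl⟩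
  exact ⟨(k, i), hi, rfl⟩

theorem span_range_tmul_eq_top {v : ι → P} {w : κ → Q} (hv : Submodule.span K (Set.range v) = ⊤)
    (hw : Submodule.span K (Set.range w) = ⊤) :
    Submodule.span K (Set.range fun i : κ × ι => v i.2 ⊗ₜ[K] w i.1) = ⊤ := by
  rw [eq_top_iff, ← TensorProduct.span_tmul_eq_top, Submodule.span_le]
  rintro _ ⟨p, x, rfl⟩
  simpa using tmul_mem_span_image (s := Set.univ) (v := v) (w := w) (p := p) (x := x)
    (by simp [hv]) (by simp [hw])

end TensorProducts

section Triangular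

theorem linearIndependent_of_triangular {K V ι : Type*} [Field K] [AddCommGroup V] [Module K V]
    {v : ι → V} (φ : ι → Module.Dual K V) (rank : ι → ℕ) (hdiag : ∀ i, φ i (v i) ≠ 0)
    (hzero : ∀ i j, rank j ≤ rank i → j ≠ i → φ i (v j) = 0) : LinearIndependent K v := by
  rw [linearIndependent_iff]
  intro c hc
  by_contra hne
  obtain ⟨i, hi, hmax⟩ := c.support.exists_max_image rank (Finsupp.support_nonempty_iff.2 hne)
  have hsum : φ i (Finsupp.linearCombination K v c) = c i * φ i (v i) := by
    rw [Finsupp.linearCombination_apply, Finsupp.sum, map_sum, Finset.sum_eq_single i]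
    · simp
    · intro j hj hji
      simp [hzero i j (hmax j hj) hji]
    · exact fun h => absurd hi h
  rw [hc, map_zero] at hsum
  exact mul_ne_zero (Finsupp.mem_support_iff.1 hi) (hdiag i) hsum.symm

end Triangular

section DifferentialOperators

open MvPolynomial

variable {K A I : Type*}

theorem derivation_mem_pow [CommRing K] [CommRing A] [Algebra K A] (D : Derivation K A A)
    {J : Ideal A} {k : ℕ} {a : A} (ha : a ∈ J ^ (k + 1)) : D a ∈ J ^ k := by
  induction k generalizing a with
  | zero => simp
  | succ k ih =>
    rw [pow_succ] at ha
    induction ha using Submodule.mul_induction_on' with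
    | mem_mul_mem a ha b hb =>
      rw [Derivation.leibniz, smul_eq_mul, smul_eq_mul]
      refine add_mem (Ideal.mul_mem_right _ _ ha) ?_
      rw [pow_succ']
      exact Ideal.mul_mem_mul hb (ih ha)
    | add a _ b _ iha ihb =>
      rw [map_add]
      exact add_mem iha ihb

/-- `k + 1` rising `|l|` times is the coefficient `(k + |l|) ⋯ (k + 1)` of the term in which each
derivation falls on a different factor of the power. -/
theorem word_derivation_pow_sub_mem [CommRing K] [CommRing A] [Algebra K A]
    (D : I → Derivation K A A) {J : Ideal A} {f : A} (hf : f ∈ J) (l : List I) (k : ℕ) :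
    word (fun i => (D i : Module.End K A)) l (f ^ (k + l.length)) -
      (k + 1).ascFactorial l.length * (f ^ k * word (fun i => D i f) l) ∈ J ^ (k + 1) := by
  induction l generalizing k with
  | nil => simp
  | cons i l ih =>
    set u := word (fun i => D i f) l
    have hleibniz : D i (((k + 2).ascFactorial l.length : A) * (f ^ (k + 1) * u)) =
        ((k + 1).ascFactorial (l.length + 1) : A) * (f ^ k * (D i f * u)) +
          f ^ (k + 1) * ((k + 2).ascFactorial l.length * D i u) := by
      have hcoeff : ((k + 1).ascFactorial (l.length + 1) : A) =
          (k + 1) * (k + 2).ascFactorial l.length := by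
        rw [Nat.ascFactorial_succ, ← Nat.succ_ascFactorial]
        push_cast
        rfl
      rw [hcoeff]
      simp only [Derivation.leibniz, Derivation.leibniz_pow, Derivation.map_natCast, smul_eq_mul,
        Nat.add_sub_cancel, nsmul_eq_mul]
      push_cast
      ring
    have hmem := derivation_mem_pow (D i) (ih (k + 1))
    rw [map_sub, hleibniz] at hmem
    have := add_mem hmem (Ideal.mul_mem_right ((k + 2).ascFactorial l.length * D i u) _
      (Ideal.pow_mem_pow hf (k + 1)))
    rw [sub_add_eq_sub_sub, sub_add_cancel] at this
    simpa [word_cons, add_right_comm, add_assoc] using this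

theorem word_X_eq_monomial [CommRing K] [DecidableEq I] (l : List I) :
    word (X : I → MvPolynomial I K) l = monomial (Multiset.toFinsupp (l : Multiset I)) 1 := by
  induction l with
  | nil => simp
  | cons i l ih =>
    rw [word_cons, ih, X, monomial_mul, mul_one, ← Multiset.cons_coe, ← Multiset.singleton_add,
      map_add, Multiset.toFinsupp_singleton]

theorem linearIndependent_word_derivation [Field K] [CharZero K] [CommRing A] [Algebra K A]
    (D : I → Derivation K A A) (ε : A →ₐ[K] MvPolynomial I K) {f : A} (hf : ε f = 0)
    (hD : ∀ i, ε (D i f) = X i) :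
    LinearIndependent K fun α : Multiset I =>
      word (fun i => (D i : Module.End K A)) α.toList := by
  classical
  have hpow (l : List I) (k : ℕ) :
      ε (word (fun i => (D i : Module.End K A)) l (f ^ (k + l.length))) =
        monomial (Multiset.toFinsupp (l : Multiset I))
          ((k + 1).ascFactorial l.length * 0 ^ k : K) := by
    have hmem := Ideal.pow_le_self k.succ_ne_zero
      (word_derivation_pow_sub_mem D (J := RingHom.ker ε) hf l k)
    rw [RingHom.mem_ker, map_sub, sub_eq_zero] at hmem
    simp only [hmem, map_mul, map_natCast, map_pow, hf, map_word, Function.comp_def, hD]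
    rw [word_X_eq_monomial, ← map_natCast C, ← map_zero C, ← map_pow, C_mul_monomial,
      C_mul_monomial, mul_one]
  let φ (α : Multiset I) : Module.Dual K (Module.End K A) :=
    lcoeff K α.toFinsupp ∘ₗ ε.toLinearMap ∘ₗ LinearMap.applyₗ (f ^ α.card)
  refine linearIndependent_of_triangular φ Multiset.card (fun α => ?_) fun α β hle hne => ?_
  · have hα := hpow α.toList 0
    rw [zero_add, Multiset.length_toList] at hα
    simp [φ, hα, Nat.one_ascFactorial, Nat.factorial_ne_zero]
  · obtain ⟨k, hk⟩ := Nat.exists_eq_add_of_le' hle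
    have hβ := hpow β.toList k
    rw [Multiset.length_toList] at hβ
    simp [φ, hk, hβ, coeff_monomial, hne]

end DifferentialOperators

section VectorFields

open MvPolynomial UniversalEnvelopingAlgebra

attribute [local instance 100] LieRing.ofAssociativeRing

theorem linearIndependent_word_ι_of_derivation {K L A I : Type*} [Field K] [CharZero K] [LieRing L]
    [LieAlgebra K L] [CommRing A] [Algebra K A] (ξ : L →ₗ⁅K⁆ Derivation K A A) {y : I → L}
    (ε : A →ₐ[K] MvPolynomial I K) {f : A} (hf : ε f = 0) (hξ : ∀ i, ε (ξ (y i) f) = X i) :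
    LinearIndependent K fun α : Multiset I => word (ι K ∘ y) α.toList := by
  let ξ' : L →ₗ⁅K⁆ Module.End K A :=
    { toFun := fun x => ξ x
      map_add' := fun x z => by simp
      map_smul' := fun r x => by simp
      map_lie' := fun {x z} => by simp [Derivation.commutator_coe_linear_map] }
  refine LinearIndependent.of_comp (lift K ξ').toLinearMap ?_
  have hword : (lift K ξ').toLinearMap ∘ (fun α : Multiset I => word (ι K ∘ y) α.toList) =
      fun α => word (fun i => (ξ (y i) : Module.End K A)) α.toList := by
    have hgen : lift K ξ' ∘ ι K ∘ y = fun i => (ξ (y i) : Module.End K A) :=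
      funext fun i => lift_ι_apply K ξ' (y i)
    simp [funext_iff, map_word, hgen]
  rw [hword]
  exact linearIndependent_word_derivation (fun i => ξ (y i)) ε hf hξ

variable {K W κ : Type*} [CommRing K] [AddCommGroup W] [Module K W]

/-- The elements of `W` as linear forms on its dual, in the coordinates of a basis. -/
noncomputable def linearForm (b : Module.Basis κ K W) : W →ₗ[K] MvPolynomial κ K :=
  b.constr K X

theorem mkDerivation_linearForm (b : Module.Basis κ K W) (Y : Module.End K W) (w : W) :
    mkDerivation K (fun k => linearForm b (Y (b k))) (linearForm b w) = linearForm b (Y w) := by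
  suffices (mkDerivation K fun k => linearForm b (Y (b k))).toLinearMap ∘ₗ linearForm b =
    linearForm b ∘ₗ Y from LinearMap.congr_fun this w
  refine b.ext fun k => ?_
  simp [linearForm, mkDerivation_X]

/-- The linear vector field of an endomorphism of `W`: the derivation of the polynomial ring that
acts on linear forms by the given endomorphism. -/
noncomputable def linearVectorField (b : Module.Basis κ K W) :
    Module.End K W →ₗ⁅K⁆ Derivation K (MvPolynomial κ K) (MvPolynomial κ K) where
  toFun Y := mkDerivation K fun k => linearForm b (Y (b k))
  map_add' Y Z := by ext; simp
  map_smul' r Y := by ext; simp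
  map_lie' {Y Z} := by
    refine MvPolynomial.derivation_ext fun k => ?_
    have hX : (X k : MvPolynomial κ K) = linearForm b (b k) := by simp [linearForm]
    rw [hX, Derivation.commutator_apply, mkDerivation_linearForm b ⁅Y, Z⁆]
    simp only [mkDerivation_linearForm, Ring.lie_def, LinearMap.sub_apply, Module.End.mul_apply,
      map_sub]

theorem linearVectorField_linearForm (b : Module.Basis κ K W) (Y : Module.End K W) (w : W) :
    linearVectorField b Y (linearForm b w) = linearForm b (Y w) :=
  mkDerivation_linearForm b Y w

theorem exists_linearForm_specialization (b : Module.Basis κ K W) {I : Type*}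
    (F : W →ₗ[K] MvPolynomial I K) :
    ∃ ε : MvPolynomial κ K →ₐ[K] MvPolynomial I K, ∀ w, ε (linearForm b w) = F w := by
  refine ⟨aeval (F ∘ b), fun w => ?_⟩
  suffices (aeval (F ∘ b)).toLinearMap ∘ₗ linearForm b = F from LinearMap.congr_fun this w
  exact b.ext fun k => by simp [linearForm]

variable (K) in
/-- Left multiplication by an associative algebra `E` on its unitization, where the unit is
independent of `E` even though `E` may have a unit of its own. -/
def unitizationMulLeft (E : Type*) [Ring E] [Algebra K E] :
    E →ₗ⁅K⁆ Module.End K (Unitization K E) where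
  toFun x := LinearMap.mulLeft K (x : Unitization K E)
  map_add' x z := LinearMap.ext fun w => by simp [add_mul]
  map_smul' r x := LinearMap.ext fun w => by simp
  map_lie' {x z} := by
    refine LinearMap.ext fun w => ?_
    simp [Ring.lie_def, sub_mul, mul_assoc]

/-- The independence half of the Poincaré–Birkhoff–Witt theorem, for the Lie algebra of an
associative algebra. -/
theorem linearIndependent_word_ι {K E I : Type*} [Field K] [CharZero K] [Ring E] [Algebra K E]
    {y : I → E} (hy : LinearIndependent K y) :
    LinearIndependent K fun α : Multiset I =>
      word (ι K ∘ y : I → UniversalEnvelopingAlgebra K E) α.toList := by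
  obtain ⟨G, hG⟩ := (Finsupp.linearCombination K y).exists_leftInverse_of_injective
    (LinearMap.ker_eq_bot.2 hy)
  let b := Module.Basis.ofVectorSpace K (Unitization K E)
  obtain ⟨ε, hε⟩ := exists_linearForm_specialization b
    (Finsupp.linearCombination K (X : I → MvPolynomial I K) ∘ₗ G ∘ₗ Unitization.sndHom K K E)
  have hGy (i : I) : G (y i) = Finsupp.single i 1 := by
    simpa using LinearMap.congr_fun hG (Finsupp.single i 1)
  refine linearIndependent_word_ι_of_derivation
    ((linearVectorField b).comp (unitizationMulLeft K E)) ε (f := linearForm b 1) ?_ fun i => ?_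
  · simp [hε]
  · simp [linearVectorField_linearForm, unitizationMulLeft, hε, hGy]

end VectorFields

section FormalSeries

open PowerSeries

attribute [local instance 100] LieRing.ofAssociativeRing

theorem coeff_add_mul_of_le_order {A : Type*} [Semiring A] {φ χ : A⟦X⟧} {i j : ℕ}
    (hφ : i ≤ φ.order) (hχ : j ≤ χ.order) :
    coeff (i + j) (φ * χ) = coeff i φ * coeff j χ := by
  rw [coeff_mul]
  refine Finset.sum_eq_single_of_mem (i, j) (by simp) fun p hp hne => ?_
  rw [Finset.HasAntidiagonal.mem_antidiagonal] at hp
  rcases lt_or_ge p.1 i with hlt | hge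
  · rw [coeff_of_lt_order _ (lt_of_lt_of_le (by exact_mod_cast hlt) hφ), zero_mul]
  · have hlt : p.2 < j := by
      contrapose! hne
      exact Prod.ext (by omega) (by omega)
    rw [coeff_of_lt_order _ (lt_of_lt_of_le (by exact_mod_cast hlt) hχ), mul_zero]

theorem le_order_of_mem_span {K A : Type*} [CommRing K] [Ring A] [Algebra K A]
    {n : ℕ} {S : Set A⟦X⟧} (hS : ∀ φ ∈ S, n ≤ φ.order) {φ : A⟦X⟧}
    (hφ : φ ∈ Submodule.span K S) : n ≤ φ.order := by
  refine le_order _ _ fun k hk => ?_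
  suffices h : Submodule.span K S ≤
      LinearMap.ker ((coeff (R := A) k).restrictScalars K) from h hφ
  exact Submodule.span_le.2 fun χ hχ => coeff_of_lt_order k (hk.trans_le (hS χ hχ))

theorem coeff_lie {A : Type*} [Ring A] (φ χ : A⟦X⟧) (n : ℕ) :
    coeff n ⁅φ, χ⁆ = ∑ p ∈ Finset.HasAntidiagonal.antidiagonal n, ⁅coeff p.1 φ, coeff p.2 χ⁆ := by
  simp only [Ring.lie_def, map_sub, coeff_mul, Finset.sum_sub_distrib]
  congr 1
  exact (Finset.Nat.sum_antidiagonal_swap (f := fun p => coeff p.1 χ * coeff p.2 φ)).symm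

variable {K A B : Type*} [CommRing K] [Ring A] [Algebra K A] [Ring B] [Algebra K B]

/-- The Lie algebra homomorphism of power series rings that applies a Lie algebra homomorphism to
each coefficient. -/
noncomputable def coeffwise (f : A →ₗ⁅K⁆ B) : A⟦X⟧ →ₗ⁅K⁆ B⟦X⟧ where
  toFun φ := mk fun n => f (coeff n φ)
  map_add' φ χ := by ext; simp
  map_smul' r φ := by ext; simp
  map_lie' {φ χ} := by ext; simp [coeff_lie]

theorem coeff_coeffwise (f : A →ₗ⁅K⁆ B) (φ : A⟦X⟧) (n : ℕ) :
    coeff n (coeffwise f φ) = f (coeff n φ) :=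
  coeff_mk n fun k => f (coeff k φ)

variable (K A B) in
/-- The comparison map `B⟦X⟧ ⊗ A → (B ⊗ A)⟦X⟧`. -/
noncomputable def tensorPowerSeries : B⟦X⟧ ⊗[K] A →ₐ[K] (B ⊗[K] A)⟦X⟧ :=
  Algebra.TensorProduct.lift (mapAlgHom Algebra.TensorProduct.includeLeft)
    { toRingHom := (PowerSeries.C).comp
        (Algebra.TensorProduct.includeRight : A →ₐ[K] B ⊗[K] A).toRingHom
      commutes' := fun r => by simp [PowerSeries.algebraMap_apply] }
    fun φ a => by
      ext n
      simp [mapAlgHom_apply, coeff_mul_C, coeff_C_mul]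

theorem coeff_tensorPowerSeries (φ : B⟦X⟧) (a : A) (n : ℕ) :
    coeff n (tensorPowerSeries K A B (φ ⊗ₜ a)) = coeff n φ ⊗ₜ a := by
  simp [tensorPowerSeries, mapAlgHom_apply, coeff_mul_C]

end FormalSeries

section CurrentAlgebra

open PowerSeries

attribute [local instance 100] LieRing.ofAssociativeRing

variable {R g A B : Type*} [CommRing R] [Algebra ℂ R] [LieRing g] [LieAlgebra ℂ g]
  [Ring A] [Algebra ℂ A] [Ring B] [Algebra ℂ B]

theorem lie_tmul_mem {S : Submodule ℂ (R ⊗[ℂ] g)} {p : R} {x : g}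
    (h : ∀ (q : R) (y : g), (q * p) ⊗ₜ ⁅y, x⁆ ∈ S) (z : R ⊗[ℂ] g) : ⁅z, p ⊗ₜ x⁆ ∈ S := by
  induction z with
  | zero => rw [zero_lie]; exact zero_mem _
  | add z z' hz hz' => rw [add_lie]; exact add_mem hz hz'
  | tmul q y => exact h q y

/-- A representation of `g` and an algebra homomorphism out of `R` give a representation of the
current algebra `R ⊗ g` on the tensor product. -/
noncomputable def currentHom (ρ : R →ₐ[ℂ] B) (φ : g →ₗ⁅ℂ⁆ A) : R ⊗[ℂ] g →ₗ⁅ℂ⁆ B ⊗[ℂ] A where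
  toLinearMap := TensorProduct.map ρ.toLinearMap φ
  map_lie' {y z} := by
    change TensorProduct.map ρ.toLinearMap φ.toLinearMap ⁅y, z⁆ =
      ⁅TensorProduct.map ρ.toLinearMap φ.toLinearMap y,
        TensorProduct.map ρ.toLinearMap φ.toLinearMap z⁆
    induction y with
    | zero => simp
    | add y₁ y₂ h₁ h₂ => rw [add_lie, map_add, map_add, add_lie, h₁, h₂]
    | tmul p x =>
      induction z with
      | zero => simp
      | add z₁ z₂ h₁ h₂ => rw [lie_add, map_add, map_add, lie_add, h₁, h₂]
      | tmul q x' =>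
        have hcomm : ρ q * ρ p = ρ p * ρ q := by rw [← map_mul, mul_comm, map_mul]
        simp [LieAlgebra.ExtendScalars.bracket_tmul, Ring.lie_def, TensorProduct.tmul_sub, hcomm]

theorem currentHom_tmul (ρ : R →ₐ[ℂ] B) (φ : g →ₗ⁅ℂ⁆ A) (p : R) (x : g) :
    currentHom ρ φ (p ⊗ₜ x) = ρ p ⊗ₜ φ x :=
  TensorProduct.map_tmul _ _ p x

/-- The formal family of representations of `R ⊗ g` attached to a formal family `ρ` of
representations of `R`. -/
noncomputable def formalCurrentHom (ρ : R →ₐ[ℂ] B⟦X⟧) (φ : g →ₗ⁅ℂ⁆ A) :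
    R ⊗[ℂ] g →ₗ⁅ℂ⁆ (B ⊗[ℂ] A)⟦X⟧ :=
  (tensorPowerSeries ℂ A B).toLieHom.comp (currentHom ρ φ)

theorem coeff_formalCurrentHom_tmul (ρ : R →ₐ[ℂ] B⟦X⟧) (φ : g →ₗ⁅ℂ⁆ A) (p : R) (x : g) (n : ℕ) :
    coeff n (formalCurrentHom ρ φ (p ⊗ₜ x)) = coeff n (ρ p) ⊗ₜ φ x := by
  simp [formalCurrentHom, currentHom_tmul, coeff_tensorPowerSeries]

end CurrentAlgebra

section Matrices

open PowerSeries

variable {n : Type*} {R : Type*} [Semiring R] [DecidableEq n] [Fintype n]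

/-- The conjugate of a matrix by the diagonal matrix with entries `X ^ w p`, as a power series with
matrix coefficients. Entries for which the exponent `w q - w p` of `X` is negative are dropped, so
this is multiplicative only on matrices which are block triangular for `w`. -/
def weightSeries (w : n → ℕ) (A : Matrix n n R) : (Matrix n n R)⟦X⟧ :=
  mk fun k => Matrix.of fun p q => if w p + k = w q then A p q else 0

theorem coeff_weightSeries_apply (w : n → ℕ) (A : Matrix n n R) (k : ℕ) (p q : n) :
    coeff k (weightSeries w A) p q = if w p + k = w q then A p q else 0 := by
  rw [weightSeries, coeff_mk, Matrix.of_apply]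

theorem weightSeries_one (w : n → ℕ) : weightSeries w (1 : Matrix n n R) = 1 := by
  ext k p q
  rw [coeff_weightSeries_apply, coeff_one]
  rcases eq_or_ne p q with rfl | hpq
  · simp only [Nat.add_eq_left]
    split_ifs <;> simp
  · split_ifs <;> simp [hpq]

theorem weightSeries_mul {w : n → ℕ} {A A' : Matrix n n R} (hA : A.BlockTriangular w)
    (hA' : A'.BlockTriangular w) :
    weightSeries w (A * A') = weightSeries w A * weightSeries w A' := by
  ext k p q
  have key (r : n) : ∑ x ∈ Finset.HasAntidiagonal.antidiagonal k,
      (if w p + x.1 = w r then A p r else 0) * (if w r + x.2 = w q then A' r q else 0) =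
        if w p + k = w q then A p r * A' r q else 0 := by
    rcases lt_or_ge (w r) (w p) with hp | hp
    · simp [hA hp]
    rcases lt_or_ge (w q) (w r) with hq | hq
    · simp [hA' hq]
    by_cases hk : w p + k = w q
    · rw [if_pos hk, Finset.sum_eq_single_of_mem (w r - w p, w q - w r)
        (Finset.HasAntidiagonal.mem_antidiagonal.2 (by omega))]
      · rw [if_pos (by omega), if_pos (by omega)]
      · refine fun x _ hx => ?_
        rw [Ne, Prod.ext_iff] at hx
        split_ifs <;> first | omega | simp
    · refine (Finset.sum_eq_zero fun x hx => ?_).trans (if_neg hk).symm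
      rw [Finset.HasAntidiagonal.mem_antidiagonal] at hx
      split_ifs <;> first | omega | simp
  rw [coeff_mul, Matrix.sum_apply, coeff_weightSeries_apply]
  simp only [Matrix.mul_apply, coeff_weightSeries_apply]
  rw [Finset.sum_comm, Finset.sum_congr rfl fun r _ => key r]
  split_ifs <;> simp

/-- The `m`-th power of the nilpotent Jordan block of size `M`. -/
def shiftMatrix (M m : ℕ) : Matrix (Fin M) (Fin M) R :=
  Matrix.of fun p q => if (p : ℕ) + m = q then 1 else 0

theorem shiftMatrix_mul (M m m' : ℕ) :
    (shiftMatrix M m * shiftMatrix M m' : Matrix _ _ R) = shiftMatrix M (m + m') := by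
  ext p q
  simp only [Matrix.mul_apply, shiftMatrix, Matrix.of_apply, ite_mul, one_mul, zero_mul, ← ite_and]
  by_cases h : (p : ℕ) + (m + m') = q
  · rw [if_pos h, Finset.sum_eq_single ⟨p + m, by omega⟩]
    all_goals simp [Fin.ext_iff]; try omega
  · rw [if_neg h]
    exact Finset.sum_eq_zero fun r _ => if_neg (by omega)

theorem shiftMatrix_zero (M : ℕ) : (shiftMatrix M 0 : Matrix _ _ R) = 1 := by
  ext p q
  simp [shiftMatrix, Matrix.one_apply, Fin.ext_iff]

theorem blockTriangular_shiftMatrix {M : ℕ} (m : ℕ) {w : Fin M → ℕ} (hw : Monotone w) :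
    (shiftMatrix M m : Matrix _ _ R).BlockTriangular w := fun p q hpq =>
  if_neg fun h => hpq.not_ge (hw (Fin.le_def.2 (by omega)))

end Matrices

section TruncatedPolynomials

open PowerSeries

/-- The class of `t ^ m` in `ℂ[t]/t^M`. -/
noncomputable abbrev truncMonomial (M m : ℕ) : TruncT M :=
  Ideal.Quotient.mk _ (Polynomial.X ^ m)

/-- The class of `t ^ s * u ^ j` in `ℂ[t,u]/⟨t^N, u^(c+1)⟩`. -/
noncomputable abbrev toroidalMonomial (N c s j : ℕ) : TruncTU N c :=
  Ideal.Quotient.mk _ (MvPolynomial.X 0 ^ s * MvPolynomial.X 1 ^ j)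

theorem truncMonomial_add (M m m' : ℕ) :
    truncMonomial M (m + m') = truncMonomial M m * truncMonomial M m' := by
  rw [truncMonomial, pow_add, map_mul]

theorem truncMonomial_eq_zero {M m : ℕ} (h : M ≤ m) : truncMonomial M m = 0 :=
  Ideal.Quotient.eq_zero_iff_mem.2 (Ideal.mem_span_singleton.2 (pow_dvd_pow _ h))

theorem toroidalMonomial_eq_zero {N c s j : ℕ} (h : N ≤ s ∨ c + 1 ≤ j) :
    toroidalMonomial N c s j = 0 := by
  refine Ideal.Quotient.eq_zero_iff_mem.2 ?_
  rcases h with h | h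
  · exact Ideal.mul_mem_right _ _
      (Ideal.mem_of_dvd _ (pow_dvd_pow _ h) (Ideal.subset_span (by simp)))
  · exact Ideal.mul_mem_left _ _
      (Ideal.mem_of_dvd _ (pow_dvd_pow _ h) (Ideal.subset_span (by simp)))

/-- The series of matrices that represents `t ^ m` in `truncRep`. -/
def shiftSeries (M N m : ℕ) : (Matrix (Fin M) (Fin M) ℂ)⟦X⟧ :=
  weightSeries (fun p : Fin M => (p : ℕ) / N) (shiftMatrix M m)

theorem shiftSeries_pow (M N m : ℕ) : shiftSeries M N 1 ^ m = shiftSeries M N m := by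
  have hw : Monotone fun p : Fin M => (p : ℕ) / N := fun _ _ h => Nat.div_le_div_right h
  induction m with
  | zero => rw [pow_zero, shiftSeries, shiftMatrix_zero, weightSeries_one]
  | succ m ih =>
    rw [pow_succ, ih, shiftSeries, shiftSeries, shiftSeries, ← shiftMatrix_mul, weightSeries_mul
      (blockTriangular_shiftMatrix m hw) (blockTriangular_shiftMatrix 1 hw)]

theorem coeff_shiftSeries (M N m k : ℕ) (p q : Fin M) : coeff k (shiftSeries M N m) p q =
    if (p : ℕ) + m = q ∧ (p : ℕ) / N + k = q / N then 1 else 0 := by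
  rw [shiftSeries, coeff_weightSeries_apply, shiftMatrix, Matrix.of_apply, ← ite_and]
  exact if_congr and_comm rfl rfl

theorem le_order_shiftSeries (M N m : ℕ) : (m / N : ℕ) ≤ (shiftSeries M N m).order := by
  refine le_order _ _ fun k hk => ?_
  ext p q
  rw [coeff_shiftSeries]
  refine if_neg fun ⟨hq, hk'⟩ => ?_
  rw [← hq] at hk'
  have := Nat.div_add_div_le_add_div (x := p) (y := m) (z := N)
  have : k < m / N := by exact_mod_cast hk
  omega

/-- The regular representation of `ℂ[t]/t^M` by upper triangular matrices, deformed so that the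
formal variable counts how often a multiplication carries the exponent of `t` over a multiple
of `N`. -/
noncomputable def truncRep (M N : ℕ) : TruncT M →ₐ[ℂ] (Matrix (Fin M) (Fin M) ℂ)⟦X⟧ :=
  Ideal.Quotient.liftₐ _ (Polynomial.aeval (shiftSeries M N 1)) fun a ha => by
    obtain ⟨b, rfl⟩ := Ideal.mem_span_singleton.1 ha
    have hM : shiftSeries M N M = 0 := by
      ext k p q
      rw [coeff_shiftSeries, if_neg (by omega), map_zero, Matrix.zero_apply]
    rw [map_mul, map_pow, Polynomial.aeval_X, shiftSeries_pow, hM, zero_mul]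

theorem truncRep_truncMonomial (M N m : ℕ) :
    truncRep M N (truncMonomial M m) = shiftSeries M N m := by
  refine ((Ideal.Quotient.liftₐ_apply _ _ _ _).trans (Ideal.Quotient.lift_mk _ _ _)).trans ?_
  change Polynomial.aeval (shiftSeries M N 1) (Polynomial.X ^ m) = _
  rw [map_pow, Polynomial.aeval_X, shiftSeries_pow]

theorem linearIndependent_coeff_shiftSeries (M N : ℕ) :
    LinearIndependent ℂ fun m : Fin M => coeff ((m : ℕ) / N) (shiftSeries M N m) := by
  refine Fintype.linearIndependent_iff.2 fun r hr m => ?_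
  have h := congrFun (congrFun hr ⟨0, m.pos⟩) m
  rw [Matrix.sum_apply] at h
  simpa [coeff_shiftSeries, ← Fin.ext_iff, ite_and] using h

end TruncatedPolynomials

section LeadingCoefficients

open PowerSeries

variable {N c : ℕ} {B : Type*} [Ring B] [Algebra ℂ B]
  {ρ : TruncT ((c + 1) * N) →ₐ[ℂ] B⟦X⟧}

variable (ρ) in
/-- The coefficient of order `j` of the series that represents `t ^ (j * N + s)`. -/
noncomputable def symbol (s j : ℕ) : B :=
  coeff j (ρ (truncMonomial _ (j * N + s)))

theorem symbol_zero : symbol ρ 0 0 = 1 := by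
  simp [symbol]

theorem symbol_add (hN : 0 < N) (hρ : ∀ m, (m / N : ℕ) ≤ (ρ (truncMonomial _ m)).order)
    (s s' j j' : ℕ) : symbol ρ (s + s') (j + j') = symbol ρ s j * symbol ρ s' j' := by
  have hle (s j : ℕ) : j ≤ (ρ (truncMonomial _ (j * N + s))).order :=
    le_trans (by exact_mod_cast (Nat.le_div_iff_mul_le hN).2 (Nat.le_add_right _ s)) (hρ _)
  rw [symbol, symbol, symbol, ← coeff_add_mul_of_le_order (hle s j) (hle s' j'), ← map_mul,
    ← truncMonomial_add]
  ring_nf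

theorem symbol_eq_zero (hN : 0 < N) (hρ : ∀ m, (m / N : ℕ) ≤ (ρ (truncMonomial _ m)).order)
    {s j : ℕ} (h : N ≤ s ∨ c + 1 ≤ j) : symbol ρ s j = 0 := by
  rcases h with h | h
  · refine coeff_of_lt_order _ (lt_of_lt_of_le ?_ (hρ _))
    exact_mod_cast (Nat.le_div_iff_mul_le hN).2 (by rw [Nat.succ_mul]; omega)
  · rw [symbol, truncMonomial_eq_zero, map_zero, map_zero]
    exact (Nat.mul_le_mul_right N h).trans (Nat.le_add_right _ _)

theorem X_pow_mul_X_pow_eq_monomial (s j : ℕ) :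
    (MvPolynomial.X 0 ^ s * MvPolynomial.X 1 ^ j : MvPolynomial (Fin 2) ℂ) =
      MvPolynomial.monomial (Finsupp.single 0 s + Finsupp.single 1 j) 1 := by
  rw [MvPolynomial.X_pow_eq_monomial, MvPolynomial.X_pow_eq_monomial, MvPolynomial.monomial_mul,
    one_mul]

/-- The representation `t ^ s * u ^ j ↦ symbol ρ s j` of `ℂ[t,u]`. -/
noncomputable def symbolPolyHom (hN : 0 < N)
    (hρ : ∀ m, (m / N : ℕ) ≤ (ρ (truncMonomial _ m)).order) : MvPolynomial (Fin 2) ℂ →ₐ[ℂ] B :=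
  AddMonoidAlgebra.lift ℂ _ (Fin 2 →₀ ℕ)
    { toFun := fun d => symbol ρ (d.toAdd 0) (d.toAdd 1)
      map_one' := symbol_zero
      map_mul' := fun _ _ => symbol_add hN hρ _ _ _ _ }

theorem symbolPolyHom_X_pow (hN : 0 < N)
    (hρ : ∀ m, (m / N : ℕ) ≤ (ρ (truncMonomial _ m)).order) (s j : ℕ) :
    symbolPolyHom hN hρ (MvPolynomial.X 0 ^ s * MvPolynomial.X 1 ^ j) = symbol ρ s j := by
  rw [X_pow_mul_X_pow_eq_monomial]
  refine (AddMonoidAlgebra.lift_single _ _ _).trans ?_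
  rw [one_smul]
  change symbol ρ _ _ = _
  simp

/-- If `ρ` represents `t ^ m` by a series of order at least `m / N`, then its leading coefficients
represent `ℂ[t,u]/⟨t^N, u^(c+1)⟩`. -/
noncomputable def symbolHom (hN : 0 < N) (hρ : ∀ m, (m / N : ℕ) ≤ (ρ (truncMonomial _ m)).order) :
    TruncTU N c →ₐ[ℂ] B :=
  Ideal.Quotient.liftₐ _ (symbolPolyHom hN hρ) fun a ha => by
    obtain ⟨x, y, rfl⟩ := Ideal.mem_span_pair.1 ha
    have ht := symbolPolyHom_X_pow hN hρ N 0
    have hu := symbolPolyHom_X_pow hN hρ 0 (c + 1)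
    rw [pow_zero, mul_one, symbol_eq_zero hN hρ (Or.inl le_rfl)] at ht
    rw [pow_zero, one_mul, symbol_eq_zero hN hρ (Or.inr le_rfl)] at hu
    rw [map_add, map_mul, map_mul, ht, hu, mul_zero, mul_zero, add_zero]

theorem symbolHom_toroidalMonomial (hN : 0 < N)
    (hρ : ∀ m, (m / N : ℕ) ≤ (ρ (truncMonomial _ m)).order) (s j : ℕ) :
    symbolHom hN hρ (toroidalMonomial N c s j) = symbol ρ s j :=
  ((Ideal.Quotient.liftₐ_apply _ _ _ _).trans (Ideal.Quotient.lift_mk _ _ _)).trans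
    (symbolPolyHom_X_pow hN hρ s j)

end LeadingCoefficients

section Generators

variable {g β : Type*} [LieRing g] [LieAlgebra ℂ g] (b : Module.Basis β ℂ g)

/-- The basis `b ⊗ t ^ m` of the truncated current algebra. -/
noncomputable def truncGen {M : ℕ} (i : β × Fin M) : TruncT M ⊗[ℂ] g :=
  truncMonomial M i.2 ⊗ₜ b i.1

/-- The basis `b ⊗ t ^ s * u ^ j` of the truncated toroidal current algebra, where `(s, j)` is
encoded by `j * N + s`. -/
noncomputable def toroidalGen {N c : ℕ} (i : β × Fin ((c + 1) * N)) : TruncTU N c ⊗[ℂ] g :=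
  toroidalMonomial N c (i.2 % N) (i.2 / N) ⊗ₜ b i.1

theorem mk_X_pow_mul_mem_span_truncMonomial (M m : ℕ) (p : Polynomial ℂ) :
    (Ideal.Quotient.mk _ (Polynomial.X ^ m * p) : TruncT M) ∈
      Submodule.span ℂ ((fun k : Fin M => truncMonomial M k) '' {k | m ≤ k}) := by
  induction p using Polynomial.induction_on' with
  | add p q hp hq =>
    rw [mul_add, map_add]
    exact add_mem hp hq
  | monomial k r =>
    rw [← Polynomial.C_mul_X_pow_eq_monomial, ← Polynomial.smul_eq_C_mul, mul_smul_comm, ← pow_add]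
    change r • truncMonomial M (m + k) ∈ _
    refine Submodule.smul_mem _ r ?_
    rcases lt_or_ge (m + k) M with h | h
    · exact Submodule.subset_span ⟨⟨m + k, h⟩, Nat.le_add_right m k, rfl⟩
    · rw [truncMonomial_eq_zero h]
      exact zero_mem _

theorem mk_X_pow_mul_tmul_mem_span_truncGen (M m : ℕ) (p : Polynomial ℂ) (x : g) :
    (Ideal.Quotient.mk _ (Polynomial.X ^ m * p) : TruncT M) ⊗ₜ[ℂ] x ∈
      Submodule.span ℂ (truncGen b '' {i : β × Fin M | m ≤ i.2}) :=
  tmul_mem_span_image (v := fun k : Fin M => truncMonomial M k) (w := b) (s := {k | m ≤ k})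
    (mk_X_pow_mul_mem_span_truncMonomial M m p) (by simp only [b.span_eq, Submodule.mem_top])

theorem span_truncGen_eq_top (M : ℕ) :
    Submodule.span ℂ (Set.range (truncGen b : β × Fin M → _)) = ⊤ := by
  refine span_range_tmul_eq_top (v := fun k : Fin M => truncMonomial M k) (w := b)
    (eq_top_iff.2 ?_) b.span_eq
  rintro p -
  obtain ⟨p, rfl⟩ := Ideal.Quotient.mk_surjective p
  simpa using mk_X_pow_mul_mem_span_truncMonomial M 0 p

theorem span_toroidalMonomial_eq_top (N c : ℕ) : Submodule.span ℂ (Set.range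
    fun m : Fin ((c + 1) * N) => toroidalMonomial N c (m % N) (m / N)) = ⊤ := by
  rw [eq_top_iff]
  rintro p -
  obtain ⟨p, rfl⟩ := Ideal.Quotient.mk_surjective p
  induction p using MvPolynomial.induction_on' with
  | add p q hp hq =>
    rw [map_add]
    exact add_mem hp hq
  | monomial d r =>
    have hd : MvPolynomial.monomial d r =
        r • (MvPolynomial.X 0 ^ d 0 * MvPolynomial.X 1 ^ d 1 : MvPolynomial (Fin 2) ℂ) := by
      have h : Finsupp.single 0 (d 0) + Finsupp.single 1 (d 1) = d := by
        ext k
        fin_cases k <;> simp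
      rw [X_pow_mul_X_pow_eq_monomial, h, MvPolynomial.smul_monomial, smul_eq_mul, mul_one]
    rw [hd]
    change r • toroidalMonomial N c (d 0) (d 1) ∈ _
    refine Submodule.smul_mem _ r ?_
    by_cases h : N ≤ d 0 ∨ c + 1 ≤ d 1
    · rw [toroidalMonomial_eq_zero h]
      exact zero_mem _
    · push Not at h
      have hlt : N * d 1 + d 0 < (c + 1) * N := by nlinarith
      refine Submodule.subset_span ⟨⟨N * d 1 + d 0, hlt⟩, ?_⟩
      simp only [Nat.mul_add_mod, Nat.mod_eq_of_lt h.1, Nat.mul_add_div (by omega : N > 0),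
        Nat.div_eq_of_lt h.1, add_zero]

theorem span_toroidalGen_eq_top (N c : ℕ) :
    Submodule.span ℂ (Set.range (toroidalGen b : β × Fin ((c + 1) * N) → TruncTU N c ⊗[ℂ] g)) =
      ⊤ :=
  span_range_tmul_eq_top (v := fun m : Fin ((c + 1) * N) => toroidalMonomial N c (m % N) (m / N))
    (w := b) (span_toroidalMonomial_eq_top N c) b.span_eq

end Generators

section Filtration

open UniversalEnvelopingAlgebra

attribute [local instance 100] LieRing.ofAssociativeRing

variable {M N : ℕ} {g β : Type*} [LieRing g] [LieAlgebra ℂ g]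

theorem commutator_mem_Wsub (z : TruncT M ⊗[ℂ] g) {w : UTrunc M g} (hw : w ∈ Wsub M N g) :
    ι ℂ z * w - w * ι ℂ z ∈ Wsub M N g := by
  suffices h : Wsub M N g ≤ (Wsub M N g).comap
      (LinearMap.mulLeft ℂ (ι ℂ z : UTrunc M g) - LinearMap.mulRight ℂ (ι ℂ z)) from h hw
  refine Submodule.span_le.2 ?_
  rintro _ ⟨p, x, rfl⟩
  change ι ℂ z * ι ℂ _ - ι ℂ _ * ι ℂ z ∈ Wsub M N g
  rw [ι_mul_sub_mul_ι]
  refine lie_tmul_mem (S := (Wsub M N g).comap (ι ℂ : TruncT M ⊗[ℂ] g →ₗ⁅ℂ⁆ _).toLinearMap)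
    (fun q y => ?_) z
  obtain ⟨q, rfl⟩ := Ideal.Quotient.mk_surjective q
  exact Submodule.subset_span ⟨q * p, ⁅y, x⁆, by rw [← map_mul, mul_left_comm]; rfl⟩

theorem top_mul_Wsub_le : (⊤ : Submodule ℂ (UTrunc M g)) * Wsub M N g ≤ Wsub M N g * ⊤ := by
  refine top_mul_le_mul_top_of_commutator_mem adjoin_range_ι_eq_top ?_
  rintro _ ⟨z, rfl⟩ w hw
  exact commutator_mem_Wsub z hw

theorem top_mul_Tfil_le (j : ℕ) : ⊤ * Tfil M N g j ≤ Tfil M N g j := by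
  induction j with
  | zero => exact le_top
  | succ j ih =>
    calc ⊤ * Tfil M N g (j + 1) = ⊤ * Wsub M N g * Tfil M N g j := (mul_assoc _ _ _).symm
      _ ≤ Wsub M N g * ⊤ * Tfil M N g j := mul_le_mul_left top_mul_Wsub_le _
      _ = Wsub M N g * (⊤ * Tfil M N g j) := mul_assoc _ _ _
      _ ≤ Tfil M N g (j + 1) := mul_le_mul_right ih _

theorem Tfil_mul_le (i j : ℕ) : Tfil M N g i * Tfil M N g j ≤ Tfil M N g (i + j) := by
  induction i with
  | zero =>
    rw [zero_add]
    exact top_mul_Tfil_le j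
  | succ i ih =>
    rw [Nat.succ_add]
    calc Tfil M N g (i + 1) * Tfil M N g j = Wsub M N g * (Tfil M N g i * Tfil M N g j) :=
        mul_assoc _ _ _
      _ ≤ Tfil M N g (i + j + 1) := mul_le_mul_right ih _

theorem mul_mem_Tfil {i j : ℕ} {u v : UTrunc M g} (hu : u ∈ Tfil M N g i)
    (hv : v ∈ Tfil M N g j) : u * v ∈ Tfil M N g (i + j) :=
  Tfil_mul_le i j (Submodule.mul_mem_mul hu hv)

theorem Tfil_antitone (M N : ℕ) : Antitone (Tfil M N g) :=
  antitone_nat_of_succ_le fun j => (mul_le_mul_left le_top _).trans (top_mul_Tfil_le j)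

theorem ι_truncMonomial_tmul_mem_Wsub {m : ℕ} (h : N ≤ m) (x : g) :
    ι ℂ (truncMonomial M m ⊗ₜ[ℂ] x) ∈ Wsub M N g :=
  Submodule.subset_span ⟨Polynomial.X ^ (m - N), x, by rw [← pow_add, Nat.add_sub_cancel' h]⟩

theorem ι_truncMonomial_tmul_mem_Tfil (hg : ⁅(⊤ : LieIdeal ℂ g), (⊤ : LieIdeal ℂ g)⁆ = ⊤)
    {m j : ℕ} (h : j * N ≤ m) (x : g) : ι ℂ (truncMonomial M m ⊗ₜ[ℂ] x) ∈ Tfil M N g j := by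
  induction j generalizing m x with
  | zero => trivial
  | succ j ih =>
    rw [Nat.succ_mul] at h
    have hx : x ∈ Submodule.span ℂ {z : g | ∃ y ∈ (⊤ : LieIdeal ℂ g), ∃ y' ∈ (⊤ : LieIdeal ℂ g),
        ⁅y, y'⁆ = z} := by
      rw [← LieSubmodule.lieIdeal_oper_eq_linear_span', hg]
      trivial
    induction hx using Submodule.span_induction with
    | mem x hx =>
      obtain ⟨y, -, y', -, rfl⟩ := hx
      have hy : ι ℂ (truncMonomial M N ⊗ₜ[ℂ] y) ∈ Tfil M N g 1 := by
        rw [← mul_one (ι ℂ (truncMonomial M N ⊗ₜ[ℂ] y))]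
        exact Submodule.mul_mem_mul (ι_truncMonomial_tmul_mem_Wsub le_rfl y) trivial
      have hy' : ι ℂ (truncMonomial M (m - N) ⊗ₜ[ℂ] y') ∈ Tfil M N g j := ih (by omega) y'
      rw [← Nat.add_sub_cancel' (by omega : N ≤ m), truncMonomial_add,
        ← LieAlgebra.ExtendScalars.bracket_tmul, ← ι_mul_sub_mul_ι]
      exact sub_mem (add_comm 1 j ▸ mul_mem_Tfil hy hy') (mul_mem_Tfil hy' hy)
    | zero =>
      rw [TensorProduct.tmul_zero, map_zero]
      exact zero_mem _
    | add x y _ _ hx hy =>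
      rw [TensorProduct.tmul_add, map_add]
      exact add_mem hx hy
    | smul r x _ hx =>
      rw [TensorProduct.tmul_smul, map_smul]
      exact Submodule.smul_mem _ _ hx

variable (b : Module.Basis β ℂ g)

theorem word_truncGen_mem_Tfil (hg : ⁅(⊤ : LieIdeal ℂ g), (⊤ : LieIdeal ℂ g)⁆ = ⊤)
    (l : List (β × Fin M)) : word (ι ℂ ∘ truncGen b) l ∈
      Tfil M N g (l.map fun i => (i.2 : ℕ) / N).sum := by
  induction l with
  | nil => trivial
  | cons i l ih =>
    exact mul_mem_Tfil (ι_truncMonomial_tmul_mem_Tfil hg (Nat.div_mul_le_self _ _) _) ih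

theorem Wsub_le_span_truncGen (hN : 0 < N) : Wsub M N g ≤
    Submodule.span ℂ ((ι ℂ ∘ truncGen b) '' {i : β × Fin M | 1 ≤ (i.2 : ℕ) / N}) := by
  refine Submodule.span_le.2 ?_
  rintro _ ⟨p, x, rfl⟩
  refine ι_mem_span_image (Submodule.span_mono ?_ (mk_X_pow_mul_tmul_mem_span_truncGen b M N p x))
  exact Set.image_mono fun i hi => (Nat.one_le_div_iff hN).2 hi

theorem Tfil_le_span_word (hN : 0 < N) (j : ℕ) : Tfil M N g j ≤
    Submodule.span ℂ (word (ι ℂ ∘ truncGen b) ''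
      {l : List (β × Fin M) | j ≤ (l.map fun i => (i.2 : ℕ) / N).sum}) := by
  induction j with
  | zero =>
    simp [span_word_ι_eq_top (K := ℂ) (L := TruncT M ⊗[ℂ] g) (span_truncGen_eq_top b M)]
  | succ j ih =>
    refine (mul_le_mul' (Wsub_le_span_truncGen b hN) ih).trans ?_
    rw [Submodule.span_mul_span, Submodule.span_le]
    rintro _ ⟨_, ⟨i, hi, rfl⟩, _, ⟨l, hl, rfl⟩, rfl⟩
    refine Submodule.subset_span ⟨i :: l, ?_, rfl⟩
    rw [Set.mem_ofPred_eq, List.map_cons, List.sum_cons]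
    exact add_comm j 1 ▸ add_le_add hi hl

theorem commutator_truncGen_mem_span (i k : β × Fin M) :
    (ι ℂ ∘ truncGen b) i * (ι ℂ ∘ truncGen b) k - (ι ℂ ∘ truncGen b) k * (ι ℂ ∘ truncGen b) i ∈
      Submodule.span ℂ ((ι ℂ ∘ truncGen b : β × Fin M → UTrunc M g) ''
        {l | (i.2 : ℕ) / N + k.2 / N ≤ l.2 / N}) := by
  have h := mk_X_pow_mul_tmul_mem_span_truncGen b M (i.2 + k.2) 1 ⁅b i.1, b k.1⁆
  rw [mul_one, pow_add, map_mul, ← LieAlgebra.ExtendScalars.bracket_tmul] at h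
  rw [Function.comp_apply, Function.comp_apply, ι_mul_sub_mul_ι]
  refine ι_mem_span_image (Submodule.span_mono (Set.image_mono fun l hl => ?_) h)
  exact Nat.div_add_div_le_add_div.trans (Nat.div_le_div_right hl)

theorem Tfil_le_span_word_toList (hN : 0 < N) (j : ℕ) : Tfil M N g j ≤
    Submodule.span ℂ ((fun α : Multiset (β × Fin M) => word (ι ℂ ∘ truncGen b) α.toList) ''
      {α | j ≤ (α.map fun i => (i.2 : ℕ) / N).sum}) := by
  refine (Tfil_le_span_word b hN j).trans (Submodule.span_le.2 ?_)
  rintro _ ⟨l, hl, rfl⟩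
  exact word_mem_span_word_toList (commutator_truncGen_mem_span b) l hl

end Filtration

theorem exists_linearEquiv_of_linearIndependent_comp {K ι V W U : Type*} [Semiring K]
    [AddCommMonoid V] [Module K V] [AddCommMonoid W] [Module K W] [AddCommMonoid U] [Module K U]
    {f : V →ₗ[K] U} {h : W →ₗ[K] U} {v : ι → V} {w : ι → W}
    (hv : Submodule.span K (Set.range v) = ⊤) (hw : Submodule.span K (Set.range w) = ⊤)
    (hfh : ∀ i, f (v i) = h (w i)) (hli : LinearIndependent K fun i => h (w i)) :
    ∃ e : V ≃ₗ[K] W, ∀ x, h (e x) = f x := by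
  have hli' : LinearIndependent K fun i => f (v i) := by simpa only [hfh] using hli
  let bv := Module.Basis.mk (LinearIndependent.of_comp f hli') hv.ge
  let bw := Module.Basis.mk (LinearIndependent.of_comp h hli) hw.ge
  refine ⟨bv.equiv bw (Equiv.refl ι), fun x => ?_⟩
  suffices h ∘ₗ (bv.equiv bw (Equiv.refl ι)).toLinearMap = f from LinearMap.congr_fun this x
  refine bv.ext fun i => ?_
  rw [LinearMap.comp_apply, LinearEquiv.coe_coe, Module.Basis.equiv_apply, Equiv.refl_apply,
    Module.Basis.mk_apply, Module.Basis.mk_apply, hfh]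

section Symbol

open PowerSeries UniversalEnvelopingAlgebra

variable {M N c : ℕ} {g β E : Type*} [LieRing g] [LieAlgebra ℂ g] [Ring E] [Algebra ℂ E]
  {Φ : UTrunc M g →ₐ[ℂ] E⟦X⟧} (b : Module.Basis β ℂ g)

variable (M N g) in
/-- The class map `T_j → T_j / T_{j+1} ⊆ gr A`. -/
noncomputable def grClass (j : ℕ) : Tfil M N g j →ₗ[ℂ] grT M N g :=
  DirectSum.lof ℂ ℕ (fun j => Tfil M N g j ⧸ (Tfil M N g (j + 1)).comap (Tfil M N g j).subtype) j ∘ₗ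
    Submodule.mkQ _

theorem grClass_eq_zero {j : ℕ} {u : Tfil M N g j} (hu : (u : UTrunc M g) ∈ Tfil M N g (j + 1)) :
    grClass M N g j u = 0 := by
  have h : ((Tfil M N g (j + 1)).comap (Tfil M N g j).subtype).mkQ u = 0 :=
    (Submodule.Quotient.mk_eq_zero _).2 hu
  rw [grClass, LinearMap.comp_apply, h, map_zero]

theorem le_order_word (hΦ : ∀ m x, (m / N : ℕ) ≤ (Φ (ι ℂ (truncMonomial M m ⊗ₜ x))).order)
    (l : List (β × Fin M)) : (l.map fun i => (i.2 : ℕ) / N).sum ≤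
      (Φ (word (ι ℂ ∘ truncGen b) l)).order := by
  induction l with
  | nil => simp
  | cons i l ih =>
    rw [List.map_cons, List.sum_cons, word_cons, map_mul, Nat.cast_add]
    exact (add_le_add (hΦ i.2 (b i.1)) ih).trans (le_order_mul _ _)

theorem le_order_of_mem_Tfil (hN : 0 < N)
    (hΦ : ∀ m x, (m / N : ℕ) ≤ (Φ (ι ℂ (truncMonomial M m ⊗ₜ x))).order) {j : ℕ}
    {u : UTrunc M g} (hu : u ∈ Tfil M N g j) : j ≤ (Φ u).order := by
  let b := Module.Basis.ofVectorSpace ℂ g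
  have h := Submodule.mem_map_of_mem (f := Φ.toLinearMap) (Tfil_le_span_word b hN j hu)
  rw [Submodule.map_span] at h
  refine le_order_of_mem_span ?_ h
  rintro _ ⟨_, ⟨l, hl, rfl⟩, rfl⟩
  exact le_trans (by exact_mod_cast hl) (le_order_word b hΦ l)

/-- The map on `gr A` induced by taking the coefficient of order `j` on `T_j`. -/
noncomputable def grSymbol (hN : 0 < N)
    (hΦ : ∀ m x, (m / N : ℕ) ≤ (Φ (ι ℂ (truncMonomial M m ⊗ₜ x))).order) : grT M N g →ₗ[ℂ] E :=
  DirectSum.toModule ℂ ℕ _ fun j => Submodule.liftQ _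
    ((coeff (R := E) j).restrictScalars ℂ ∘ₗ Φ.toLinearMap ∘ₗ (Tfil M N g j).subtype) fun _ hu =>
      coeff_of_lt_order j <| lt_of_lt_of_le (by exact_mod_cast Nat.lt_succ_self j)
        (le_order_of_mem_Tfil hN hΦ (Submodule.mem_comap.1 hu))

theorem grSymbol_grClass (hN : 0 < N)
    (hΦ : ∀ m x, (m / N : ℕ) ≤ (Φ (ι ℂ (truncMonomial M m ⊗ₜ x))).order) {j : ℕ}
    (u : Tfil M N g j) : grSymbol hN hΦ (grClass M N g j u) = coeff j (Φ u) :=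
  (DirectSum.toModule_lof ℂ j _).trans rfl

/-- The class in `gr A` of an ordered word in the generators. -/
noncomputable def grWord (hg : ⁅(⊤ : LieIdeal ℂ g), (⊤ : LieIdeal ℂ g)⁆ = ⊤)
    (α : Multiset (β × Fin M)) : grT M N g :=
  grClass M N g _ ⟨_, word_truncGen_mem_Tfil (N := N) b hg α.toList⟩

theorem span_grWord_eq_top (hN : 0 < N) (hg : ⁅(⊤ : LieIdeal ℂ g), (⊤ : LieIdeal ℂ g)⁆ = ⊤) :
    Submodule.span ℂ (Set.range (grWord (M := M) (N := N) b hg)) = ⊤ := by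
  set S := Submodule.span ℂ (Set.range (grWord (M := M) (N := N) b hg))
  have hclass (j : ℕ) : Tfil M N g j ≤ (S.comap (grClass M N g j)).map (Tfil M N g j).subtype := by
    refine (Tfil_le_span_word_toList b hN j).trans (Submodule.span_le.2 ?_)
    rintro _ ⟨α, hα, rfl⟩
    have hsum : (α.toList.map fun i => (i.2 : ℕ) / N).sum = (α.map fun i => (i.2 : ℕ) / N).sum := by
      rw [← Multiset.sum_coe, ← Multiset.map_coe, Multiset.coe_toList]
    have hmem := word_truncGen_mem_Tfil (N := N) b hg α.toList
    rw [Set.mem_ofPred_eq, ← hsum] at hα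
    refine ⟨⟨_, Tfil_antitone M N hα hmem⟩, ?_, rfl⟩
    rcases hα.eq_or_lt with rfl | hlt
    · exact Submodule.subset_span ⟨α, rfl⟩
    · have hzero := grClass_eq_zero (u := ⟨_, Tfil_antitone M N hα hmem⟩)
        (Tfil_antitone M N hlt hmem)
      exact Submodule.mem_comap.2 (hzero ▸ zero_mem S)
  rw [eq_top_iff]
  rintro z -
  induction z using DirectSum.induction_on with
  | zero => exact zero_mem S
  | add z z' hz hz' => exact add_mem hz hz'
  | of j u =>
    obtain ⟨u, rfl⟩ := Submodule.Quotient.mk_surjective _ u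
    obtain ⟨v, hv, hvu⟩ := hclass j u.2
    rwa [Subtype.ext hvu] at hv

theorem grSymbol_grWord {Φ : UTrunc ((c + 1) * N) g →ₐ[ℂ] E⟦X⟧} {Θ : UToroidal N c g →ₐ[ℂ] E}
    (hN : 0 < N) (hg : ⁅(⊤ : LieIdeal ℂ g), (⊤ : LieIdeal ℂ g)⁆ = ⊤)
    (hΦ : ∀ m x, (m / N : ℕ) ≤ (Φ (ι ℂ (truncMonomial _ m ⊗ₜ x))).order)
    (hΘ : ∀ s j x, coeff j (Φ (ι ℂ (truncMonomial _ (j * N + s) ⊗ₜ x))) =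
      Θ (ι ℂ (toroidalMonomial N c s j ⊗ₜ x))) (α : Multiset (β × Fin ((c + 1) * N))) :
    grSymbol hN hΦ (grWord b hg α) = Θ (word (ι ℂ ∘ toroidalGen b) α.toList) := by
  refine (grSymbol_grClass hN hΦ _).trans ?_
  change coeff _ (Φ (word (ι ℂ ∘ truncGen b) α.toList)) = _
  induction α.toList with
  | nil => simp
  | cons i l ih =>
    have h := hΘ (i.2 % N) (i.2 / N) (b i.1)
    rw [Nat.div_add_mod'] at h
    rw [List.map_cons, List.sum_cons, word_cons, word_cons, map_mul Φ, map_mul Θ, ← ih]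
    exact (coeff_add_mul_of_le_order (hΦ _ _) (le_order_word b hΦ l)).trans (by rw [h]; rfl)

end Symbol

section Realization

open PowerSeries UniversalEnvelopingAlgebra

attribute [local instance 100] LieRing.ofAssociativeRing

variable {R g A B : Type*} [CommRing R] [Algebra ℂ R] [LieRing g] [LieAlgebra ℂ g]
  [Ring A] [Algebra ℂ A] [Ring B] [Algebra ℂ B]

/-- The realization of the enveloping algebra of `R ⊗ g` attached to representations of `R` and
of `g`. -/
noncomputable def realization (ρ : R →ₐ[ℂ] B) (φ : g →ₗ⁅ℂ⁆ A) :
    UniversalEnvelopingAlgebra ℂ (R ⊗[ℂ] g) →ₐ[ℂ] UniversalEnvelopingAlgebra ℂ (B ⊗[ℂ] A) :=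
  lift ℂ ((ι ℂ).comp (currentHom ρ φ))

theorem realization_ι_tmul (ρ : R →ₐ[ℂ] B) (φ : g →ₗ⁅ℂ⁆ A) (p : R) (x : g) :
    realization ρ φ (ι ℂ (p ⊗ₜ x)) = ι ℂ (ρ p ⊗ₜ φ x) := by
  rw [realization, lift_ι_apply, LieHom.comp_apply, currentHom_tmul]

/-- The formal family of realizations of the enveloping algebra of `R ⊗ g` attached to a formal
family `ρ` of representations of `R`. -/
noncomputable def formalRealization (ρ : R →ₐ[ℂ] B⟦X⟧) (φ : g →ₗ⁅ℂ⁆ A) :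
    UniversalEnvelopingAlgebra ℂ (R ⊗[ℂ] g) →ₐ[ℂ] (UniversalEnvelopingAlgebra ℂ (B ⊗[ℂ] A))⟦X⟧ :=
  lift ℂ ((coeffwise (ι ℂ)).comp (formalCurrentHom ρ φ))

theorem coeff_formalRealization_ι_tmul (ρ : R →ₐ[ℂ] B⟦X⟧) (φ : g →ₗ⁅ℂ⁆ A) (p : R) (x : g) (n : ℕ) :
    coeff n (formalRealization ρ φ (ι ℂ (p ⊗ₜ x))) = ι ℂ (coeff n (ρ p) ⊗ₜ φ x) := by
  rw [formalRealization, lift_ι_apply, LieHom.comp_apply, coeff_coeffwise,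
    coeff_formalCurrentHom_tmul]

theorem order_le_order_formalRealization (ρ : R →ₐ[ℂ] B⟦X⟧) (φ : g →ₗ⁅ℂ⁆ A) (p : R) (x : g) :
    (ρ p).order ≤ (formalRealization ρ φ (ι ℂ (p ⊗ₜ x))).order :=
  le_order _ _ fun k hk => by
    rw [coeff_formalRealization_ι_tmul, coeff_of_lt_order k hk, TensorProduct.zero_tmul, map_zero]

theorem le_order_truncRep (M N m : ℕ) :
    (m / N : ℕ) ≤ (truncRep M N (truncMonomial M m)).order :=
  truncRep_truncMonomial M N m ▸ le_order_shiftSeries M N m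

theorem linearIndependent_realization_word_toroidalGen {N : ℕ} (hN : 0 < N) (c : ℕ) {β : Type*}
    (b : Module.Basis β ℂ g) {φ : g →ₗ⁅ℂ⁆ A} (hφ : Function.Injective φ) :
    LinearIndependent ℂ fun α : Multiset (β × Fin ((c + 1) * N)) =>
      realization (symbolHom hN (le_order_truncRep ((c + 1) * N) N)) φ
        (word (ι ℂ ∘ toroidalGen b) α.toList) := by
  have hli : LinearIndependent ℂ fun i : β × Fin ((c + 1) * N) =>
      coeff ((i.2 : ℕ) / N) (shiftSeries ((c + 1) * N) N i.2) ⊗ₜ[ℂ] φ (b i.1) :=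
    ((linearIndependent_coeff_shiftSeries _ N).tmul_of_isDomain
      (b.linearIndependent.map' φ.toLinearMap (LinearMap.ker_eq_bot.2 hφ))).comp Prod.swap
        Prod.swap_injective
  have hgen : realization (symbolHom hN (le_order_truncRep ((c + 1) * N) N)) φ ∘
      (ι ℂ ∘ toroidalGen b) = ι ℂ ∘ fun i : β × Fin ((c + 1) * N) =>
        coeff ((i.2 : ℕ) / N) (shiftSeries ((c + 1) * N) N i.2) ⊗ₜ[ℂ] φ (b i.1) := by
    funext i
    rw [Function.comp_apply, Function.comp_apply, toroidalGen, realization_ι_tmul,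
      symbolHom_toroidalMonomial, symbol, truncRep_truncMonomial, Nat.div_add_mod',
      Function.comp_apply]
  simp only [map_word, hgen]
  exact linearIndependent_word_ι hli

end Realization

theorem lie_top_top_eq_top_of_isSimple (g : Type*) [LieRing g] [LieAlgebra ℂ g]
    [LieAlgebra.IsSimple ℂ g] :
    ⁅(⊤ : LieIdeal ℂ g), (⊤ : LieIdeal ℂ g)⁆ = ⊤ := by
  refine (LieAlgebra.IsSimple.eq_bot_or_eq_top _).resolve_left fun h => ?_
  refine LieAlgebra.IsSimple.non_abelian ℂ (L := g) ⟨fun x y => ?_⟩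
  rw [← LieSubmodule.mem_bot (R := ℂ) (L := g), ← h]
  exact LieSubmodule.lie_mem_lie trivial trivial

section Comparison

open PowerSeries UniversalEnvelopingAlgebra

variable {N c : ℕ} {g β E : Type*} [LieRing g] [LieAlgebra ℂ g] [Ring E] [Algebra ℂ E]
  {Φ : UTrunc ((c + 1) * N) g →ₐ[ℂ] E⟦X⟧} {Θ : UToroidal N c g →ₐ[ℂ] E}

theorem exists_linearEquiv_of_coeff_eq (b : Module.Basis β ℂ g)
    (hN : 0 < N) (hg : ⁅(⊤ : LieIdeal ℂ g), (⊤ : LieIdeal ℂ g)⁆ = ⊤)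
    (hΦ : ∀ m x, (m / N : ℕ) ≤ (Φ (ι ℂ (truncMonomial _ m ⊗ₜ x))).order)
    (hΘ : ∀ s j x, coeff j (Φ (ι ℂ (truncMonomial _ (j * N + s) ⊗ₜ x))) =
      Θ (ι ℂ (toroidalMonomial N c s j ⊗ₜ x)))
    (hli : LinearIndependent ℂ fun α : Multiset (β × Fin ((c + 1) * N)) =>
      Θ (word (ι ℂ ∘ toroidalGen b) α.toList)) :
    Function.Injective Θ ∧ ∃ e : grT ((c + 1) * N) N g ≃ₗ[ℂ] UToroidal N c g,
      ∀ j (u : Tfil ((c + 1) * N) N g j), Θ (e (grClass _ N g j u)) = coeff j (Φ u) := by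
  have hspan := span_word_ι_toList_eq_top (K := ℂ) (L := TruncTU N c ⊗[ℂ] g)
    (span_toroidalGen_eq_top b N c)
  have hinj : Function.Injective Θ :=
    LinearMap.injective_of_linearIndependent (f := Θ.toLinearMap) hspan hli
  obtain ⟨e, he⟩ := exists_linearEquiv_of_linearIndependent_comp (f := grSymbol hN hΦ)
    (h := Θ.toLinearMap) (span_grWord_eq_top b hN hg) hspan
    (grSymbol_grWord b hN hg hΦ hΘ) hli
  exact ⟨hinj, e, fun j u => (he _).trans (grSymbol_grClass hN hΦ u)⟩

end Comparison

theorem gr_iso_toroidal_general (N c : ℕ) (hN : 0 < N) (g V : Type*) [LieRing g] [LieAlgebra ℂ g]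
    (hg : ⁅(⊤ : LieIdeal ℂ g), (⊤ : LieIdeal ℂ g)⁆ = ⊤) [AddCommGroup V] [Module ℂ V]
    [LieRingModule g V] [LieModule ℂ g V] [LieModule.IsFaithful ℂ g V] :
    ∃ e : grT ((c + 1) * N) N g ≃ₗ[ℂ] UToroidal N c g,
      (∀ (h : (1 : UTrunc ((c + 1) * N) g) ∈ Tfil ((c + 1) * N) N g 0),
        e (DirectSum.of _ 0 (Submodule.Quotient.mk ⟨1, h⟩)) = 1) ∧
      (∀ (i j : ℕ) (a : Tfil ((c + 1) * N) N g i) (b : Tfil ((c + 1) * N) N g j)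
          (h : (a : UTrunc ((c + 1) * N) g) * b ∈ Tfil ((c + 1) * N) N g (i + j)),
        e (DirectSum.of _ (i + j) (Submodule.Quotient.mk ⟨(a : UTrunc ((c + 1) * N) g) * b, h⟩))
          = e (DirectSum.of _ i (Submodule.Quotient.mk a)) *
              e (DirectSum.of _ j (Submodule.Quotient.mk b))) ∧
      (∀ (x : g) (j s : ℕ) (_ : s < N)
          (h : UniversalEnvelopingAlgebra.ι ℂ
              ((Ideal.Quotient.mk _ (Polynomial.X ^ (j * N + s)) : TruncT ((c + 1) * N))
                ⊗ₜ[ℂ] x) ∈ Tfil ((c + 1) * N) N g j),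
        e (DirectSum.of _ j (Submodule.Quotient.mk ⟨_, h⟩))
          = UniversalEnvelopingAlgebra.ι ℂ
              ((Ideal.Quotient.mk _ (MvPolynomial.X 0 ^ s * MvPolynomial.X 1 ^ j) :
                TruncTU N c) ⊗ₜ[ℂ] x)) := by
  let φ := LieModule.toEnd ℂ g V
  let Φ := formalRealization (truncRep ((c + 1) * N) N) φ
  let Θ := realization (symbolHom hN (le_order_truncRep ((c + 1) * N) N)) φ
  have hΦ m x : (m / N : ℕ) ≤ (Φ (.ι ℂ (truncMonomial _ m ⊗ₜ x))).order :=
    (le_order_truncRep _ N m).trans (order_le_order_formalRealization _ φ _ x)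
  have hΘ s j x : PowerSeries.coeff j (Φ (.ι ℂ (truncMonomial _ (j * N + s) ⊗ₜ x))) =
      Θ (.ι ℂ (toroidalMonomial N c s j ⊗ₜ x)) := by
    rw [coeff_formalRealization_ι_tmul, realization_ι_tmul, symbolHom_toroidalMonomial, symbol]
  let b := Module.Basis.ofVectorSpace ℂ g
  obtain ⟨hinj, e, he⟩ := exists_linearEquiv_of_coeff_eq b hN hg hΦ hΘ
    (linearIndependent_realization_word_toroidalGen hN c b LieModule.IsFaithful.injective_toEnd)
  refine ⟨e, fun h => hinj ?_, fun i j u v h => hinj ?_, fun x j s _ h => hinj ?_⟩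
  · rw [map_one]
    exact (he 0 ⟨1, h⟩).trans (by simp)
  · rw [map_mul]
    refine (he _ ⟨_, h⟩).trans (.trans ?_ (congrArg₂ (· * ·) (he i u) (he j v)).symm)
    rw [map_mul, coeff_add_mul_of_le_order (le_order_of_mem_Tfil hN hΦ u.2)
      (le_order_of_mem_Tfil hN hΦ v.2)]
  · exact (he j ⟨_, h⟩).trans (hΘ s j x)

/-- Theorem 3.5 (Lemma 3.4 on the level of the cyclic module `A` itself): for a
finite-dimensional complex simple Lie algebra `g` and `M = (c+1)N`, the associated
graded algebra of `A = U(g ⊗ ℂ[t]/t^M)` with respect to the `t^N`-filtration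
`T_0 = A`, `T_j = (g ⊗ t^N ℂ[t])·T_{j−1}` is isomorphic as an associative algebra to
`U(g ⊗ ℂ[t,u]/⟨t^N,u^{c+1}⟩)`: there is a linear equivalence `e` which is unital and
multiplicative with respect to the graded product (`[a]·[b] = [ab]` for `a ∈ T_i`,
`b ∈ T_j`, `ab ∈ T_{i+j}`) and sends the class in `T_j/T_{j+1}` of
`x ⊗ t^{jN+s}` (for `0 ≤ s < N`) to `x ⊗ u^j t^s`. -/
theorem gr_iso_toroidal (N c : ℕ) (hN : 0 < N) (hc : 0 < c)
    (g : Type*) [LieRing g] [LieAlgebra ℂ g]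
    [FiniteDimensional ℂ g] [LieAlgebra.IsSimple ℂ g] :
    ∃ e : grT ((c + 1) * N) N g ≃ₗ[ℂ] UToroidal N c g,
      (∀ (h : (1 : UTrunc ((c + 1) * N) g) ∈ Tfil ((c + 1) * N) N g 0),
        e (DirectSum.of _ 0 (Submodule.Quotient.mk ⟨1, h⟩)) = 1) ∧
      (∀ (i j : ℕ) (a : Tfil ((c + 1) * N) N g i) (b : Tfil ((c + 1) * N) N g j)
          (h : (a : UTrunc ((c + 1) * N) g) * b ∈ Tfil ((c + 1) * N) N g (i + j)),
        e (DirectSum.of _ (i + j) (Submodule.Quotient.mk ⟨(a : UTrunc ((c + 1) * N) g) * b, h⟩))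
          = e (DirectSum.of _ i (Submodule.Quotient.mk a)) *
              e (DirectSum.of _ j (Submodule.Quotient.mk b))) ∧
      (∀ (x : g) (j s : ℕ) (_ : s < N)
          (h : UniversalEnvelopingAlgebra.ι ℂ
              ((Ideal.Quotient.mk _ (Polynomial.X ^ (j * N + s)) : TruncT ((c + 1) * N))
                ⊗ₜ[ℂ] x) ∈ Tfil ((c + 1) * N) N g j),
        e (DirectSum.of _ j (Submodule.Quotient.mk ⟨_, h⟩))
          = UniversalEnvelopingAlgebra.ι ℂ
              ((Ideal.Quotient.mk _ (MvPolynomial.X 0 ^ s * MvPolynomial.X 1 ^ j) :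
                TruncTU N c) ⊗ₜ[ℂ] x)) :=
  gr_iso_toroidal_general N c hN g g (lie_top_top_eq_top_of_isSimple g)
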